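/- arXiv:2103.16186 — 2 statements merged into one kernel-verified Lean document; each statement's English description precedes it below -/
import Mathlib

section
/- Let T be a set of three affinely independent points in ℕ_0^2. Then for every α ∈ T there exists a point β ∈ E_1^∞(T) with β ≠ α such that both coordinates of β − α are positive integers. -/
open MeasureTheory
open scoped Classical ENNReal

noncomputable section

/-- The `d`-dimensional torus, modelled as `d` copies of `ℝ/ℤ`,
whose product `volume` measure is the normalized Haar measure. -/
abbrev Torus (d : ℕ) := Fin d → AddCircle (1 : ℝ)

/-- The character `z ↦ z^α` on the torus. -/
def torusChar {d : ℕ} (α : Fin d → ℤ) (x : Torus d) : ℂ :=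
  ∏ j, fourier (α j) (x j)

/-- The trigonometric polynomial with frequencies in `F` and coefficients `a`. -/
def trigPoly {d : ℕ} (F : Finset (Fin d → ℤ)) (a : (Fin d → ℤ) → ℂ) (x : Torus d) : ℂ :=
  ∑ α ∈ F, a α * torusChar α x

/-- The set `ℕ₀^d` of multi-indices with nonnegative entries. -/
def NN (d : ℕ) : Set (Fin d → ℤ) := {α | ∀ j, 0 ≤ α j}

/-- `Λ` is a coset in `ℤ^d`, i.e. a translate of a subgroup. -/
def IsCoset {d : ℕ} (Λ : Set (Fin d → ℤ)) : Prop :=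
  ∃ (x : Fin d → ℤ) (H : AddSubgroup (Fin d → ℤ)),
    Λ = (x + ·) '' (H : Set (Fin d → ℤ))

/-- `Λ` is a contractive projection set for `L^p(𝕋^d)`:
the projection onto frequencies in `Λ` is contractive on trigonometric polynomials. -/
def IsContractiveLp (d : ℕ) (p : ℝ≥0∞) (Λ : Set (Fin d → ℤ)) : Prop :=
  ∀ (F : Finset (Fin d → ℤ)) (a : (Fin d → ℤ) → ℂ),
    eLpNorm (trigPoly (F.filter (· ∈ Λ)) a) p volume ≤ eLpNorm (trigPoly F a) p volume

/-- `Γ` is a contractive projection set for `H^p(𝕋^d)`: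
the projection onto frequencies in `Γ` is contractive on analytic polynomials. -/
def IsContractiveHp (d : ℕ) (p : ℝ≥0∞) (Γ : Set (Fin d → ℤ)) : Prop :=
  ∀ F : Finset (Fin d → ℤ), ↑F ⊆ NN d → ∀ a : (Fin d → ℤ) → ℂ,
    eLpNorm (trigPoly (F.filter (· ∈ Γ)) a) p volume ≤ eLpNorm (trigPoly F a) p volume

/-- `Γ` has dimension `k`: the subgroup generated by the differences `γ - γ₀` has rank `k`. -/
def HasDim {d : ℕ} (Γ : Set (Fin d → ℤ)) (k : ℕ) : Prop :=
  ∀ γ₀ ∈ Γ, Module.finrank ℤ (Submodule.span ℤ ((· - γ₀) '' Γ)) = k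

/-- `H^p(𝕋^d)` enjoys the contractive restriction property of dimension `k`:
every `k`-dimensional contractive projection set for `H^p(𝕋^d)` is the restriction
of a coset in `ℤ^d` to `ℕ₀^d`. -/
def ContractiveRestrictionProperty (d : ℕ) (p : ℝ≥0∞) (k : ℕ) : Prop :=
  ∀ Γ : Set (Fin d → ℤ), Γ.Nonempty → Γ ⊆ NN d → HasDim Γ k → IsContractiveHp d p Γ →
    ∃ Λ : Set (Fin d → ℤ), IsCoset Λ ∧ Γ = Λ ∩ NN d

/-- The coset `Λ(Γ)` in `ℤ^d` generated by `Γ`. -/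
def cosetGen {d : ℕ} (Γ : Set (Fin d → ℤ)) : Set (Fin d → ℤ) :=
  ⋃ γ₀ ∈ Γ, (γ₀ + ·) '' (AddSubgroup.closure ((· - γ₀) '' Γ) : Set (Fin d → ℤ))

/-- The `n`-extension `E_n(Γ)`: all points of `Λ(Γ) ∩ ℕ₀^d` at distance at most `n` from `Γ`. -/
def Eext {d : ℕ} (n : ℕ) (Γ : Set (Fin d → ℤ)) : Set (Fin d → ℤ) :=
  {lam | lam ∈ cosetGen Γ ∩ NN d ∧ ∃ γ ∈ Γ, ∃ m : (Fin d → ℤ) →₀ ℤ,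
    (↑m.support : Set (Fin d → ℤ)) ⊆ Γ \ {γ} ∧
    lam = γ + ∑ α ∈ m.support, m α • (α - γ) ∧
    (∑ α ∈ m.support, max (m α) 0) ≤ (n : ℤ) ∧
    (∑ α ∈ m.support, max (-(m α)) 0) ≤ (n : ℤ)}

/-- Iterated `n`-extensions `E_n^k(Γ)`. -/
def EextIter {d : ℕ} (n : ℕ) : ℕ → Set (Fin d → ℤ) → Set (Fin d → ℤ)
  | 0, Γ => Eext n Γ
  | (k + 1), Γ => Eext n (EextIter n k Γ)

/-- The `n`-completion `E_n^∞(Γ)`. -/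
def EextInf {d : ℕ} (n : ℕ) (Γ : Set (Fin d → ℤ)) : Set (Fin d → ℤ) :=
  ⋃ k, EextIter n k Γ

/-!
For `n ≥ 1`, `E_n^∞(Γ)` contains `a + b - c` whenever it contains `a`, `b`, `c` and `a + b - c` has
nonnegative coordinates. Hence `u = b - c` acts on it by translation as soon as `c ≤ b`, and if
`c ≠ b`, adding a large multiple of `u` to `α + q - p`, where `p` and `q` are points of the set with
`p j < q j` in the coordinate `j` in which `u` might vanish, produces a point above `α` in both
coordinates. A pair `c < b` exists because an antichain closed under `a + b - c` lies on a line: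
if `a` is its leftmost point and `b` the next one, then subtracting `b - a` from any point other
than `a` gives a point of the antichain further left, so that this descent ends at `a`.
-/

/-- Integral collinearity: the differences of points of `S` are integer multiples of a single
vector. Its negation serves as the affine independence hypothesis on a subset of `ℤ^d`, where
`Collinear` is not available because `ℤ^d` is not a vector space. -/
def IsIntCollinear {G : Type*} [AddCommGroup G] (S : Set G) : Prop :=
  ∃ v : G, ∀ a ∈ S, ∀ b ∈ S, b - a ∈ AddSubgroup.zmultiples v

theorem IsIntCollinear.mono {G : Type*} [AddCommGroup G] {S T : Set G} (hT : IsIntCollinear T)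
    (hST : S ⊆ T) : IsIntCollinear S :=
  hT.imp fun _ hv a ha b hb => hv a (hST ha) b (hST hb)

theorem not_isIntCollinear_of_linearIndependent {G : Type*} [AddCommGroup G] {S : Set G}
    {t₀ t₁ t₂ : G} (h₀ : t₀ ∈ S) (h₁ : t₁ ∈ S) (h₂ : t₂ ∈ S)
    (hind : LinearIndependent ℤ ![t₁ - t₀, t₂ - t₀]) : ¬ IsIntCollinear S := by
  rintro ⟨v, hv⟩
  obtain ⟨m, hm⟩ := AddSubgroup.mem_zmultiples_iff.1 (hv t₀ h₀ t₁ h₁)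
  obtain ⟨n, hn⟩ := AddSubgroup.mem_zmultiples_iff.1 (hv t₀ h₀ t₂ h₂)
  have hrel : n • (t₁ - t₀) + (-m) • (t₂ - t₀) = 0 := by
    rw [← hm, ← hn, smul_smul, smul_smul, ← add_smul, neg_mul, mul_comm, add_neg_cancel, zero_smul]
  have hm0 : m = 0 := neg_eq_zero.1 (LinearIndependent.pair_iff.1 hind n (-m) hrel).2
  exact hind.ne_zero 0 (by simp [← hm, hm0])

theorem linearIndependent_int_of_linearIndependent_cast {K κ ι : Type*} [Ring K] [CharZero K]
    {x : κ → ι → ℤ} (h : LinearIndependent K fun k j => (x k j : K)) : LinearIndependent ℤ x :=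
  LinearIndependent.of_comp ((Int.castAddHom K).toIntLinearMap.compLeft ι)
    (h.restrict_scalars' ℤ)

theorem exists_forall_apply_le_of_nonneg {X : Type*} {f : X → ℤ} {T : Set X} (hT : T.Nonempty)
    (hf : ∀ a ∈ T, 0 ≤ f a) : ∃ a ∈ T, ∀ b ∈ T, f a ≤ f b := by
  obtain ⟨a, ha, hmin⟩ := exists_minimalFor_of_wellFoundedLT (· ∈ T) (fun a => (f a).toNat) hT
  refine ⟨a, ha, fun b hb => ?_⟩
  have hfb : 0 ≤ f b := hf b hb
  have hle : (f b).toNat ≤ (f a).toNat → (f a).toNat ≤ (f b).toNat := hmin hb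
  omega

theorem exists_apply_lt_apply_of_not_isIntCollinear {S : Set (Fin 2 → ℤ)}
    (hS : ¬ IsIntCollinear S) (j : Fin 2) : ∃ p ∈ S, ∃ q ∈ S, p j < q j := by
  by_contra! hconst
  refine hS ⟨Pi.single j.rev 1, fun a ha b hb =>
    AddSubgroup.mem_zmultiples_iff.2 ⟨(b - a) j.rev, ?_⟩⟩
  have hj : a j = b j := le_antisymm (hconst b hb a ha) (hconst a ha b hb)
  ext i
  fin_cases j <;> fin_cases i <;> simp_all

/-- A set of nonnegative elements is parallelogram-closed if it contains the fourth vertex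
`a + b - c` of any parallelogram with the other three vertices in it, provided that this vertex is
nonnegative. It abstracts the property of `E_n^∞(Γ)` from which points above a given one are
constructed. -/
structure IsParallelogramClosed {G : Type*} [AddCommGroup G] [PartialOrder G] (S : Set G) :
    Prop where
  nonneg : ∀ ⦃a⦄, a ∈ S → 0 ≤ a
  add_sub_mem : ∀ ⦃a b c⦄, a ∈ S → b ∈ S → c ∈ S → 0 ≤ a + b - c → a + b - c ∈ S

namespace IsParallelogramClosed

theorem add_nsmul_sub_mem {G : Type*} [AddCommGroup G] [PartialOrder G] [IsOrderedAddMonoid G]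
    {S : Set G} (hS : IsParallelogramClosed S) {a b c : G} (ha : a ∈ S) (hb : b ∈ S)
    (hc : c ∈ S) (hcb : c ≤ b) (k : ℕ) : a + k • (b - c) ∈ S := by
  induction k with
  | zero => simpa using ha
  | succ k ih =>
    have hstep : a + (k + 1) • (b - c) = a + k • (b - c) + b - c := by
      rw [succ_nsmul]
      abel
    rw [hstep]
    refine hS.add_sub_mem ih hb hc ?_
    rw [add_sub_assoc]
    exact add_nonneg (hS.nonneg ih) (sub_nonneg.2 hcb)

theorem exists_strongLT_of_le {ι R : Type*} [Finite ι] [AddCommGroup R] [LinearOrder R]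
    [IsOrderedAddMonoid R] [Archimedean R] {S : Set (ι → R)} (hS : IsParallelogramClosed S)
    {a b p q α : ι → R} (ha : a ∈ S) (hb : b ∈ S) (hp : p ∈ S) (hq : q ∈ S) (hα : α ∈ S)
    (hab : a ≤ b) (hpq : ∀ j, a j = b j → p j < q j) : ∃ β ∈ S, StrongLT α β := by
  obtain ⟨k, hk⟩ : ∃ k : ℕ, ∀ j, p j - q j < k • (b j - a j) := by
    refine (Filter.eventually_all.2 fun j => ?_).exists (f := Filter.atTop)
    obtain hj | hj := (hab j).eq_or_lt
    · exact Filter.Eventually.of_forall fun k => by simpa [hj] using hpq j hj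
    · have : Nontrivial R := ⟨a j, b j, hj.ne⟩
      have hlim := Filter.tendsto_id.atTop_nsmul_const (sub_pos.2 hj)
      exact hlim.eventually (Filter.eventually_gt_atTop (α := R) _)
  have hlt : StrongLT α (α + k • (b - a) + q - p) := fun j => by
    have hkj : 0 < k • (b j - a j) - (p j - q j) := sub_pos.2 (hk j)
    calc α j < α j + (k • (b j - a j) - (p j - q j)) := lt_add_of_pos_right _ hkj
      _ = (α + k • (b - a) + q - p) j := by
        simp only [Pi.add_apply, Pi.sub_apply, Pi.smul_apply]
        abel
  exact ⟨_, hS.add_sub_mem (hS.add_nsmul_sub_mem hα hb ha hab k) hq hp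
    ((hS.nonneg hα).trans hlt.le), hlt⟩

section Plane

variable {S : Set (Fin 2 → ℤ)}

theorem sub_mem_zmultiples_of_leftmost (hS : IsParallelogramClosed S) {a b : Fin 2 → ℤ}
    (ha : a ∈ S) (hb : b ∈ S) (hab₀ : a 0 < b 0) (hab₁ : b 1 < a 1)
    (hnext : ∀ c ∈ S, c ≠ a → b 0 ≤ c 0) {c : Fin 2 → ℤ} (hc : c ∈ S) :
    c - a ∈ AddSubgroup.zmultiples (b - a) := by
  induction hn : (c 0).toNat using Nat.strong_induction_on generalizing c with
  | _ n ih =>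
    obtain rfl | hca := eq_or_ne c a
    · simp
    have ha₀ : 0 ≤ a 0 := hS.nonneg ha 0
    have hc₁ : 0 ≤ c 1 := hS.nonneg hc 1
    have hbc : b 0 ≤ c 0 := hnext c hc hca
    have hnn₀ : 0 ≤ c 0 + a 0 - b 0 := by omega
    have hnn₁ : 0 ≤ c 1 + a 1 - b 1 := by omega
    have hmem : c + a - b ∈ S := hS.add_sub_mem hc ha hb (Fin.forall_fin_two.2 ⟨hnn₀, hnn₁⟩)
    have hleft : ((c + a - b) 0).toNat < n := by
      simp only [Pi.sub_apply, Pi.add_apply]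
      omega
    have hsplit : c - a = (c + a - b - a) + (b - a) := by abel
    rw [hsplit]
    exact add_mem (ih _ hleft hmem rfl) (AddSubgroup.mem_zmultiples _)

theorem isIntCollinear_of_isAntichain (hS : IsParallelogramClosed S)
    (hanti : IsAntichain (· ≤ ·) S) : IsIntCollinear S := by
  obtain hsub | hnt := S.subsingleton_or_nontrivial
  · exact ⟨0, fun a ha b hb => by simp [hsub hb ha]⟩
  obtain ⟨a, ha, hleft⟩ :=
    exists_forall_apply_le_of_nonneg (f := fun c => c 0) hnt.nonempty fun c hc => hS.nonneg hc 0
  obtain ⟨b, ⟨hb, hba : b ≠ a⟩, hnext⟩ :=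
    exists_forall_apply_le_of_nonneg (f := fun c => c 0) (T := S \ {a}) (hnt.exists_ne a)
      fun c hc => hS.nonneg hc.1 0
  have hab₁ : b 1 < a 1 := by
    by_contra! h
    exact hanti ha hb hba.symm (Fin.forall_fin_two.2 ⟨hleft b hb, h⟩)
  have hab₀ : a 0 < b 0 := by
    by_contra! h
    exact hanti hb ha hba (Fin.forall_fin_two.2 ⟨h, hab₁.le⟩)
  have hmul : ∀ c ∈ S, c - a ∈ AddSubgroup.zmultiples (b - a) := fun c hc =>
    hS.sub_mem_zmultiples_of_leftmost ha hb hab₀ hab₁ (fun c hc hca => hnext c ⟨hc, hca⟩) hc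
  exact ⟨b - a, fun c hc d hd => by simpa using sub_mem (hmul d hd) (hmul c hc)⟩

theorem exists_strongLT_of_not_isIntCollinear (hS : IsParallelogramClosed S)
    (hcol : ¬ IsIntCollinear S) {α : Fin 2 → ℤ} (hα : α ∈ S) : ∃ β ∈ S, StrongLT α β := by
  obtain ⟨a, ha, b, hb, hne, hab⟩ : ∃ a ∈ S, ∃ b ∈ S, a ≠ b ∧ a ≤ b := by
    by_contra! hanti
    exact hcol (hS.isIntCollinear_of_isAntichain fun a ha b hb => hanti a ha b hb)
  obtain ⟨i, hi⟩ : ∃ i, a i ≠ b i := Function.ne_iff.1 hne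
  obtain ⟨p, hp, q, hq, hpq⟩ := exists_apply_lt_apply_of_not_isIntCollinear hcol i.rev
  refine hS.exists_strongLT_of_le ha hb hp hq hα hab fun j hj => ?_
  have hrev : ∀ k l : Fin 2, k ≠ l → k = l.rev := by decide
  have hji : j ≠ i := fun h => hi (h ▸ hj)
  exact hrev j i hji ▸ hpq

end Plane

end IsParallelogramClosed

section Extension

variable {d n : ℕ} {Γ : Set (Fin d → ℤ)}

theorem add_mem_cosetGen {γ x : Fin d → ℤ} (hγ : γ ∈ Γ)
    (hx : x ∈ AddSubgroup.closure ((· - γ) '' Γ)) : γ + x ∈ cosetGen Γ :=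
  Set.mem_iUnion₂.2 ⟨γ, hγ, x, hx, rfl⟩

theorem add_sum_smul_sub_mem_Eext {γ : Fin d → ℤ} (hγ : γ ∈ Γ) {s : Finset (Fin d → ℤ)}
    (hs : ↑s ⊆ Γ) (w : (Fin d → ℤ) → ℤ) (hpos : ∑ α ∈ s, max (w α) 0 ≤ (n : ℤ))
    (hneg : ∑ α ∈ s, max (-w α) 0 ≤ (n : ℤ)) (hnn : γ + ∑ α ∈ s, w α • (α - γ) ∈ NN d) :
    γ + ∑ α ∈ s, w α • (α - γ) ∈ Eext n Γ := by
  have hmem : ∑ α ∈ s, w α • (α - γ) ∈ AddSubgroup.closure ((· - γ) '' Γ) :=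
    sum_mem fun α hα =>
      zsmul_mem (AddSubgroup.subset_closure (Set.mem_image_of_mem (· - γ) (hs hα))) _
  -- The term `α = γ` contributes nothing to the sum, but the definition of `Eext` forbids it.
  let m : (Fin d → ℤ) →₀ ℤ := Finsupp.indicator (s.erase γ) fun α _ => w α
  have hm : ∀ α ∈ m.support, α ∈ s ∧ α ≠ γ ∧ m α = w α := fun α hα => by
    have hα' : α ∈ s.erase γ := Finsupp.support_indicator_subset _ _ hα
    exact ⟨Finset.mem_of_mem_erase hα', Finset.ne_of_mem_erase hα',
      Finsupp.indicator_of_mem hα' _⟩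
  have hms : m.support ⊆ s := fun α hα => (hm α hα).1
  have hsum : ∑ α ∈ m.support, m α • (α - γ) = ∑ α ∈ s, w α • (α - γ) := by
    rw [Finset.sum_congr rfl fun α hα => by rw [(hm α hα).2.2]]
    refine Finset.sum_subset hms fun α hα hαm => ?_
    obtain rfl | hαγ := eq_or_ne α γ
    · simp
    · have hw : w α = 0 := by simpa [m, hα, hαγ] using hαm
      simp [hw]
  have hbound : ∀ f : ℤ → ℤ, ∑ α ∈ m.support, max (f (m α)) 0 ≤ ∑ α ∈ s, max (f (w α)) 0 :=
    fun f => by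
      rw [Finset.sum_congr rfl fun α hα => by rw [(hm α hα).2.2]]
      exact Finset.sum_le_sum_of_subset_of_nonneg hms fun _ _ _ => le_max_right _ _
  exact ⟨⟨add_mem_cosetGen hγ hmem, hnn⟩, γ, hγ, m,
    fun α hα => ⟨hs (hm α hα).1, (hm α hα).2.1⟩, by rw [hsum],
    (hbound id).trans hpos, (hbound Neg.neg).trans hneg⟩

theorem mem_Eext_of_mem {a : Fin d → ℤ} (ha : a ∈ Γ) (hnn : a ∈ NN d) : a ∈ Eext n Γ := by
  simpa using add_sum_smul_sub_mem_Eext (n := n) (s := ∅) ha (by simp) 0 (by simp) (by simp)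
    (by simpa using hnn)

theorem add_sub_mem_Eext (hn : 1 ≤ n) {a b c : Fin d → ℤ} (ha : a ∈ Γ) (hb : b ∈ Γ) (hc : c ∈ Γ)
    (hnn : a + b - c ∈ NN d) : a + b - c ∈ Eext n Γ := by
  obtain rfl | hbc := eq_or_ne b c
  · rw [add_sub_cancel_right] at hnn ⊢
    exact mem_Eext_of_mem ha hnn
  let w : (Fin d → ℤ) → ℤ := Pi.single b 1 - Pi.single c 1
  have hs : (({b, c} : Finset (Fin d → ℤ)) : Set (Fin d → ℤ)) ⊆ Γ := by
    simp [Set.insert_subset_iff, hb, hc]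
  have hwb : w b = 1 := by simp [w, hbc]
  have hwc : w c = -1 := by simp [w, hbc.symm]
  have hsum : a + ∑ α ∈ {b, c}, w α • (α - a) = a + b - c := by
    rw [Finset.sum_pair hbc, hwb, hwc]
    module
  rw [← hsum] at hnn ⊢
  refine add_sum_smul_sub_mem_Eext ha hs w ?_ ?_ hnn <;>
    simpa [Finset.sum_pair hbc, hwb, hwc] using hn

theorem EextIter_subset_NN (k : ℕ) : EextIter n k Γ ⊆ NN d := by
  cases k <;> exact fun _ hx => hx.1.2

theorem EextIter_mono : Monotone fun k => EextIter n k Γ :=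
  monotone_nat_of_le_succ fun k _ hx => mem_Eext_of_mem hx (EextIter_subset_NN k hx)

theorem subset_EextInf (hΓ : Γ ⊆ NN d) : Γ ⊆ EextInf n Γ := fun _ hx =>
  Set.mem_iUnion.2 ⟨0, mem_Eext_of_mem hx (hΓ hx)⟩

theorem isParallelogramClosed_EextInf (hn : 1 ≤ n) : IsParallelogramClosed (EextInf n Γ) where
  nonneg _ ha :=
    have ⟨k, hk⟩ := Set.mem_iUnion.1 ha
    EextIter_subset_NN k hk
  add_sub_mem a b c ha hb hc hnn := by
    obtain ⟨i, hi⟩ := Set.mem_iUnion.1 ha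
    obtain ⟨j, hj⟩ := Set.mem_iUnion.1 hb
    obtain ⟨k, hk⟩ := Set.mem_iUnion.1 hc
    obtain ⟨N, hiN, hjN, hkN⟩ : ∃ N, i ≤ N ∧ j ≤ N ∧ k ≤ N := ⟨i + j + k, by omega⟩
    exact Set.mem_iUnion.2 ⟨N + 1, add_sub_mem_Eext hn (EextIter_mono hiN hi)
      (EextIter_mono hjN hj) (EextIter_mono hkN hk) hnn⟩

end Extension

theorem positive_point_dim_two_general {n : ℕ} (hn : 1 ≤ n) {Γ : Set (Fin 2 → ℤ)} (hΓ : Γ ⊆ NN 2)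
    (hcol : ¬ IsIntCollinear Γ) :
    ∀ α ∈ EextInf n Γ, ∃ β ∈ EextInf n Γ, β ≠ α ∧ ∀ j, 0 < (β - α) j := by
  intro α hα
  obtain ⟨β, hβ, hlt⟩ := (isParallelogramClosed_EextInf hn).exists_strongLT_of_not_isIntCollinear
    (fun h => hcol (h.mono (subset_EextInf hΓ))) hα
  exact ⟨β, hβ, hlt.lt.ne', fun j => sub_pos.2 (hlt j)⟩

/-- For three affinely independent points in `ℕ₀²` and every `α ∈ T`, there is
`β ∈ E_1^∞(T)`, `β ≠ α`, with both coordinates of `β - α` positive. -/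
theorem positive_point_dim_two (t₀ t₁ t₂ : Fin 2 → ℤ)
    (h₀ : t₀ ∈ NN 2) (h₁ : t₁ ∈ NN 2) (h₂ : t₂ ∈ NN 2)
    (hind : LinearIndependent ℚ
      ![fun j => ((t₁ - t₀) j : ℚ), fun j => ((t₂ - t₀) j : ℚ)]) :
    ∀ α ∈ ({t₀, t₁, t₂} : Set (Fin 2 → ℤ)),
      ∃ β ∈ EextInf 1 ({t₀, t₁, t₂} : Set (Fin 2 → ℤ)),
        β ≠ α ∧ ∀ j, 0 < (β - α) j := by
  have hT : ({t₀, t₁, t₂} : Set (Fin 2 → ℤ)) ⊆ NN 2 := by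
    simp [Set.insert_subset_iff, h₀, h₁, h₂]
  have hcast : (fun k j => (![t₁ - t₀, t₂ - t₀] k j : ℚ)) =
      ![fun j => ((t₁ - t₀) j : ℚ), fun j => ((t₂ - t₀) j : ℚ)] := by
    ext k j
    fin_cases k <;> rfl
  have hcol : ¬ IsIntCollinear ({t₀, t₁, t₂} : Set (Fin 2 → ℤ)) :=
    not_isIntCollinear_of_linearIndependent (by simp) (by simp) (by simp)
      (linearIndependent_int_of_linearIndependent_cast (hcast ▸ hind))
  exact fun α hα => positive_point_dim_two_general le_rfl hT hcol α (subset_EextInf hT hα)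

end
end

section
/- Fix an integer n ≥ 2 and let Γ_n := {(n,1,0,1), (n+1,0,1,0), (0,0,n+1,0), (0,0,0,n+1)} ⊆ ℕ_0^4. Then E_n(Γ_n) = Γ_n, while E_{n+1}(Γ_n) = Λ(Γ_n) ∩ ℕ_0^4 = Γ_n ∪ {(0,n+1,1,0)}. -/
open MeasureTheory
open scoped Classical ENNReal

noncomputable section

/-- The set `Γ_n = {(n,1,0,1), (n+1,0,1,0), (0,0,n+1,0), (0,0,0,n+1)}` of Example 4.3. -/
def GammaFour (n : ℕ) : Set (Fin 4 → ℤ) :=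
  {![(n : ℤ), 1, 0, 1], ![(n : ℤ) + 1, 0, 1, 0],
    ![0, 0, (n : ℤ) + 1, 0], ![0, 0, 0, (n : ℤ) + 1]}

/-!
Integer affine combinations of the points of `Γ_n` describe both `Λ(Γ_n)` and its extensions.
For coefficients `a, b, c, d` with sum `1` the combination is
`(n * a + (n + 1) * b, a, b + (n + 1) * c, a + (n + 1) * d)`. If this is nonnegative, then
`s = a + b` satisfies `(n + 1) * s ≥ a ≥ 0` and `n + 1 - n * s ≥ 0`, so `s ∈ {0, 1}` because
`n ≥ 2`. For `s = 0` only `(0, 0, n + 1, 0)` and `(0, 0, 0, n + 1)` arise. For `s = 1` the last two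
coordinates add up to `1`, so `a ∈ {0, 1, n + 1}`, and `a = n + 1` is the one point outside `Γ_n`.
Its coefficients `(n + 1, -n, 1, -1)` have positive part `n + 2` and negative part `n + 1`, and
leaving out a single coefficient cannot bring both down to `n`, while leaving out the third one
brings both down to `n + 1`.
-/

section AffineCombinations

variable {ι M : Type*} [Fintype ι]

lemma sum_smul_eq_add_sum_smul_sub [AddCommGroup M] {c : ι → ℤ} (hc : ∑ j, c j = 1)
    (p : ι → M) (q : M) : ∑ j, c j • p j = q + ∑ j, c j • (p j - q) := by
  simp only [smul_sub, Finset.sum_sub_distrib, ← Finset.sum_smul, hc, one_smul,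
    add_sub_cancel]

lemma exists_sum_eq_one_and_sum_smul_eq [AddCommGroup M] (p : ι → M) (i : ι) (b : ι → ℤ) :
    ∃ c : ι → ℤ, ∑ j, c j = 1 ∧ ∑ j, c j • p j = p i + ∑ j, b j • (p j - p i) := by
  have hc : ∑ j, (b + Pi.single i (1 - ∑ j, b j) : ι → ℤ) j = 1 := by
    simp [Finset.sum_add_distrib]
  refine ⟨_, hc, ?_⟩
  rw [sum_smul_eq_add_sum_smul_sub hc p (p i)]
  simp [add_smul, Finset.sum_add_distrib, Pi.single_apply, ite_smul]

lemma sum_smul_update_sub [AddCommGroup M] (p : ι → M) (b : ι → ℤ) (i : ι) (t : ℤ) :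
    ∑ j, Function.update b i t j • (p j - p i) = ∑ j, b j • (p j - p i) := by
  refine Finset.sum_congr rfl fun j _ => ?_
  obtain rfl | hj := eq_or_ne j i
  · simp
  · rw [Function.update_of_ne hj]

lemma sum_comp_update {α : Type*} [AddCommMonoid M] {f : α → M} {b : ι → α} {i : ι}
    (hb : f (b i) = 0) (t : α) : ∑ j, f (Function.update b i t j) = f t + ∑ j, f (b j) := by
  simp_rw [Function.apply_update fun _ => f]
  rw [Finset.sum_update_of_mem (Finset.mem_univ i),
    Finset.sum_eq_add_sum_sdiff_singleton_of_mem (Finset.mem_univ i) fun j => f (b j), hb,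
    zero_add]

lemma finsupp_sum_eq_sum_comp {α N : Type*} [Zero N] [AddCommMonoid M] {p : ι → α}
    (hp : p.Injective) {m : α →₀ N} (hm : (m.support : Set α) ⊆ Set.range p) {g : α → N → M}
    (hg : ∀ a, g a 0 = 0) : m.sum g = ∑ j, g (p j) (m (p j)) := by
  have hbij : Set.BijOn p (p ⁻¹' m.support) m.support :=
    ⟨fun _ h => h, hp.injOn, by
      intro a ha
      obtain ⟨j, rfl⟩ := hm ha
      exact ⟨j, ha, rfl⟩⟩
  rw [← Finsupp.sum_comapDomain p m g hbij]
  exact Finsupp.sum_fintype _ _ fun j => hg (p j)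

lemma exists_finsupp_iff_exists_fun [AddCommGroup M] {p : ι → M} (hp : p.Injective) (i : ι)
    (v : M) (k : ℤ) :
    (∃ m : M →₀ ℤ, (m.support : Set M) ⊆ Set.range p \ {p i} ∧
      v = p i + ∑ α ∈ m.support, m α • (α - p i) ∧
      ∑ α ∈ m.support, max (m α) 0 ≤ k ∧ ∑ α ∈ m.support, max (-m α) 0 ≤ k) ↔
    ∃ b : ι → ℤ, b i = 0 ∧ v = p i + ∑ j, b j • (p j - p i) ∧
      ∑ j, (b j)⁺ ≤ k ∧ ∑ j, (b j)⁻ ≤ k := by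
  have sums {m : M →₀ ℤ} (hm : (m.support : Set M) ⊆ Set.range p) :
      ∑ α ∈ m.support, m α • (α - p i) = ∑ j, m (p j) • (p j - p i) ∧
      ∑ α ∈ m.support, max (m α) 0 = ∑ j, (m (p j))⁺ ∧
      ∑ α ∈ m.support, max (-m α) 0 = ∑ j, (m (p j))⁻ :=
    ⟨finsupp_sum_eq_sum_comp hp hm (g := fun α t => t • (α - p i)) (by simp),
      finsupp_sum_eq_sum_comp hp hm (g := fun _ t => max t 0) (by simp),
      finsupp_sum_eq_sum_comp hp hm (g := fun _ t => max (-t) 0) (by simp)⟩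
  constructor
  · rintro ⟨m, hm, hv, hpos, hneg⟩
    obtain ⟨hcomb, hsum_pos, hsum_neg⟩ := sums (hm.trans Set.sdiff_subset)
    refine ⟨m ∘ p, ?_, hcomb ▸ hv, hsum_pos ▸ hpos, hsum_neg ▸ hneg⟩
    exact Finsupp.notMem_support_iff.mp fun h => (hm h).2 rfl
  · rintro ⟨b, hb, hv, hpos, hneg⟩
    let m := (Finsupp.equivFunOnFinite.symm b).mapDomain p
    have hmp (j : ι) : m (p j) = b j := Finsupp.mapDomain_apply hp _ j
    have hm : (m.support : Set M) ⊆ Set.range p := fun α hα => by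
      by_contra h
      exact Finsupp.mem_support_iff.mp hα (Finsupp.mapDomain_of_notMem_range _ α h)
    obtain ⟨hcomb, hsum_pos, hsum_neg⟩ := sums hm
    simp only [hmp] at hcomb hsum_pos hsum_neg
    refine ⟨m, fun α hα => ⟨hm hα, ?_⟩, hcomb ▸ hv, hsum_pos ▸ hpos, hsum_neg ▸ hneg⟩
    rintro rfl
    exact Finsupp.mem_support_iff.mp hα ((hmp i).trans hb)

end AffineCombinations

section Extensions

variable {d : ℕ}

lemma subset_cosetGen (Γ : Set (Fin d → ℤ)) : Γ ⊆ cosetGen Γ := fun γ hγ =>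
  Set.mem_biUnion hγ ⟨0, zero_mem _, add_zero γ⟩

lemma subset_Eext {Γ : Set (Fin d → ℤ)} (hΓ : Γ ⊆ NN d) (k : ℕ) : Γ ⊆ Eext k Γ := fun γ hγ =>
  ⟨⟨subset_cosetGen Γ hγ, hΓ hγ⟩, γ, hγ, 0, by simp⟩

variable {ι : Type*} [Fintype ι] {p : ι → Fin d → ℤ} {v : Fin d → ℤ}

lemma mem_cosetGen_range_iff :
    v ∈ cosetGen (Set.range p) ↔ ∃ c : ι → ℤ, ∑ j, c j = 1 ∧ ∑ j, c j • p j = v := by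
  have mem_closure_iff (i : ι) (h : Fin d → ℤ) :
      h ∈ AddSubgroup.closure ((· - p i) '' Set.range p) ↔
        ∃ b : ι → ℤ, ∑ j, b j • (p j - p i) = h := by
    rw [← Set.range_comp, AddSubgroup.mem_closure_range_iff_of_fintype]
    simp only [Function.comp_apply, eq_comm]
  simp only [cosetGen, Set.mem_iUnion, Set.mem_image, SetLike.mem_coe, exists_prop,
    Set.exists_range_iff, mem_closure_iff]
  constructor
  · rintro ⟨i, _, ⟨b, rfl⟩, rfl⟩
    exact exists_sum_eq_one_and_sum_smul_eq p i b
  · rintro ⟨c, hc, rfl⟩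
    obtain ⟨i, -, -⟩ := Finset.exists_ne_zero_of_sum_ne_zero (hc.trans_ne one_ne_zero)
    exact ⟨i, _, ⟨c, rfl⟩, (sum_smul_eq_add_sum_smul_sub hc p (p i)).symm⟩

/-- The index `i` is that of the base point: its coefficient is fixed by the others and not
counted, so its contribution is moved to the right-hand sides. -/
lemma mem_Eext_range_iff (hp : p.Injective) {k : ℕ} :
    v ∈ Eext k (Set.range p) ↔ v ∈ NN d ∧ ∃ c : ι → ℤ, ∑ j, c j = 1 ∧ ∑ j, c j • p j = v ∧
      ∃ i, ∑ j, (c j)⁺ ≤ (c i)⁺ + k ∧ ∑ j, (c j)⁻ ≤ (c i)⁻ + k := by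
  simp only [Eext, Set.mem_ofPred_eq, Set.mem_inter_iff, Set.exists_range_iff,
    exists_finsupp_iff_exists_fun hp, mem_cosetGen_range_iff]
  constructor
  · rintro ⟨⟨-, hv⟩, i, b, hb, rfl, hpos, hneg⟩
    let t := 1 - ∑ j, b j
    have hc : ∑ j, Function.update b i t j = 1 :=
      (sum_comp_update (f := id) hb t).trans (sub_add_cancel _ _)
    refine ⟨hv, Function.update b i t, hc, ?_, i, ?_, ?_⟩
    · rw [sum_smul_eq_add_sum_smul_sub hc p (p i), sum_smul_update_sub]
    · rw [sum_comp_update (by simp [hb]), Function.update_self]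
      gcongr
    · rw [sum_comp_update (by simp [hb]), Function.update_self]
      gcongr
  · rintro ⟨hv, c, hc, hcv, i, hpos, hneg⟩
    let b := Function.update c i 0
    have hb : b i = 0 := Function.update_self ..
    have hbc : Function.update b i (c i) = c := by simp [b]
    rw [← hbc, sum_comp_update (by simp [hb]), hbc, add_le_add_iff_left] at hpos hneg
    refine ⟨⟨⟨c, hc, hcv⟩, hv⟩, i, b, hb, ?_, hpos, hneg⟩
    rw [sum_smul_update_sub, ← sum_smul_eq_add_sum_smul_sub hc, hcv]

end Extensions

section GammaFour

variable {n : ℕ}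

/-- The points of `Γ_n` in the order of `GammaFour`, as a family, so that integer affine
combinations of them have coefficients in `Fin 4 → ℤ`. -/
def gammaFourPoint (n : ℕ) : Fin 4 → Fin 4 → ℤ :=
  ![![n, 1, 0, 1], ![n + 1, 0, 1, 0], ![0, 0, n + 1, 0], ![0, 0, 0, n + 1]]

/-- The coefficients of `(0, n + 1, 1, 0)` as an integer affine combination of the points of
`Γ_n`. -/
def extraCoeff (n : ℕ) : Fin 4 → ℤ := ![n + 1, -n, 1, -1]

lemma range_gammaFourPoint (n : ℕ) : Set.range (gammaFourPoint n) = GammaFour n := by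
  simp only [gammaFourPoint, GammaFour, Matrix.range_cons, Matrix.range_empty, Set.union_empty,
    Set.singleton_union]

lemma sum_smul_gammaFourPoint (n : ℕ) (c : Fin 4 → ℤ) :
    ∑ j, c j • gammaFourPoint n j =
      ![n * c 0 + (n + 1) * c 1, c 0, c 1 + (n + 1) * c 2, c 0 + (n + 1) * c 3] := by
  ext i
  fin_cases i <;> simp [gammaFourPoint, Fin.sum_univ_four] <;> ring

lemma gammaFourPoint_injective (n : ℕ) : (gammaFourPoint n).Injective := by
  have hn : (n : ℤ) + 1 ≠ 0 := by positivity
  intro i j h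
  fin_cases i <;> fin_cases j <;> simp [gammaFourPoint, hn, hn.symm] at h ⊢

lemma gammaFour_subset_NN (n : ℕ) : GammaFour n ⊆ NN 4 := by
  have hn : 0 ≤ (n : ℤ) + 1 := by positivity
  rintro γ (rfl | rfl | rfl | rfl) j <;> fin_cases j <;> simp [hn]

lemma sum_extraCoeff (n : ℕ) : ∑ j, extraCoeff n j = 1 := by
  simp [extraCoeff, Fin.sum_univ_four]

lemma sum_posPart_extraCoeff (n : ℕ) : ∑ j, (extraCoeff n j)⁺ = n + 2 := by
  have hpos : ((n : ℤ) + 1)⁺ = n + 1 := posPart_of_nonneg (by positivity)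
  simp [extraCoeff, Fin.sum_univ_four, hpos, add_assoc]

lemma sum_negPart_extraCoeff (n : ℕ) : ∑ j, (extraCoeff n j)⁻ = n + 1 := by
  have hneg : ((n : ℤ) + 1)⁻ = 0 := negPart_of_nonneg (by positivity)
  simp [extraCoeff, Fin.sum_univ_four, hneg]

lemma sum_extraCoeff_smul (n : ℕ) :
    ∑ j, extraCoeff n j • gammaFourPoint n j = ![0, (n : ℤ) + 1, 1, 0] := by
  rw [sum_smul_gammaFourPoint]
  ext i
  fin_cases i
  · simp only [extraCoeff, Matrix.cons_val, Fin.zero_eta]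
    ring
  all_goals simp [extraCoeff]

lemma add_eq_zero_or_one_of_nonneg {n a b c d : ℤ} (hn : 2 ≤ n) (hsum : a + b + c + d = 1)
    (h₀ : 0 ≤ n * a + (n + 1) * b) (h₁ : 0 ≤ a) (h₂ : 0 ≤ b + (n + 1) * c)
    (h₃ : 0 ≤ a + (n + 1) * d) : a + b = 0 ∨ a + b = 1 := by
  have hlower : a ≤ (n + 1) * (a + b) := by linear_combination h₀
  have hupper : n * (a + b) ≤ n + 1 := by linear_combination h₂ + h₃ + (n + 1) * hsum
  have hnonneg : 0 ≤ a + b := nonneg_of_mul_nonneg_right (h₁.trans hlower) (by linarith)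
  have hlt : a + b < 2 := lt_of_mul_lt_mul_left (hupper.trans_lt (by linarith)) (by linarith)
  omega

lemma eq_single_or_eq_extraCoeff (hn : 2 ≤ n) {c : Fin 4 → ℤ} (hc : ∑ j, c j = 1)
    (hmem : ∑ j, c j • gammaFourPoint n j ∈ NN 4) :
    (∃ i, c = Pi.single i 1) ∨ c = extraCoeff n := by
  rw [sum_smul_gammaFourPoint] at hmem
  have h₀ : 0 ≤ n * c 0 + (n + 1) * c 1 := hmem 0
  have h₁ : 0 ≤ c 0 := hmem 1
  have h₂ : 0 ≤ c 1 + (n + 1) * c 2 := hmem 2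
  have h₃ : 0 ≤ c 0 + (n + 1) * c 3 := hmem 3
  rw [Fin.sum_univ_four] at hc
  have hn' : (2 : ℤ) ≤ n := by exact_mod_cast hn
  obtain hs | hs := add_eq_zero_or_one_of_nonneg hn' hc h₀ h₁ h₂ h₃
  · have hc₀ : c 0 = 0 := by nlinarith
    have hc₁ : c 1 = 0 := by linarith
    have hc₂ : 0 ≤ c 2 := by nlinarith
    have hc₃ : 0 ≤ c 3 := by nlinarith
    left
    obtain h | h : c 2 = 1 ∧ c 3 = 0 ∨ c 2 = 0 ∧ c 3 = 1 := by omega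
    · exact ⟨2, by ext i; fin_cases i <;> simp [*]⟩
    · exact ⟨3, by ext i; fin_cases i <;> simp [*]⟩
  · have hc₁ : c 1 = 1 - c 0 := by linarith
    have hc₂ : c 2 = -c 3 := by linarith
    have hc₀_le : c 0 ≤ n + 1 := by linear_combination h₀ + (n + 1) * hs
    have h₃_le : c 0 + (n + 1) * c 3 ≤ 1 := by linear_combination h₂ + hs + (n + 1) * hc₂
    have hc₃_le : c 3 ≤ 0 := by nlinarith
    have hc₃_ge : -1 ≤ c 3 := by nlinarith
    obtain hc₃ | hc₃ : c 3 = 0 ∨ c 3 = -1 := by omega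
    · left
      obtain hc₀ | hc₀ : c 0 = 0 ∨ c 0 = 1 := by simp only [hc₃] at h₃_le; omega
      · exact ⟨1, by ext i; fin_cases i <;> simp [*]⟩
      · exact ⟨0, by ext i; fin_cases i <;> simp [*]⟩
    · have hc₀ : c 0 = n + 1 := by simp only [hc₃] at h₃; omega
      right
      ext i; fin_cases i <;> simp [extraCoeff, *]

lemma extra_mem_Eext (n : ℕ) : ![0, (n : ℤ) + 1, 1, 0] ∈ Eext (n + 1) (GammaFour n) := by
  rw [← range_gammaFourPoint, mem_Eext_range_iff (gammaFourPoint_injective n)]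
  refine ⟨fun j => ?_, extraCoeff n, sum_extraCoeff n, sum_extraCoeff_smul n, 2, ?_, ?_⟩
  · have hn : 0 ≤ (n : ℤ) + 1 := by positivity
    fin_cases j <;> simp [hn]
  · have h : (extraCoeff n 2)⁺ = 1 := posPart_of_nonneg zero_le_one
    rw [sum_posPart_extraCoeff, h]
    push_cast
    linarith
  · rw [sum_negPart_extraCoeff]
    exact_mod_cast le_add_of_nonneg_left (negPart_nonneg _)

lemma Eext_subset_gammaFour (hn : 2 ≤ n) : Eext n (GammaFour n) ⊆ GammaFour n := by
  rw [← range_gammaFourPoint]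
  intro v hv
  obtain ⟨hv, c, hc, rfl, i, hpos, hneg⟩ :=
    (mem_Eext_range_iff (gammaFourPoint_injective n)).mp hv
  obtain ⟨j, rfl⟩ | rfl := eq_single_or_eq_extraCoeff hn hc hv
  · simp [Pi.single_apply]
  · rw [sum_posPart_extraCoeff] at hpos
    rw [sum_negPart_extraCoeff] at hneg
    have hi_pos : 0 < extraCoeff n i := posPart_pos_iff.mp (by omega)
    have hi_neg : extraCoeff n i < 0 := negPart_pos_iff.mp (by omega)
    exact absurd hi_pos hi_neg.not_gt

lemma cosetGen_inter_NN_subset (hn : 2 ≤ n) :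
    cosetGen (GammaFour n) ∩ NN 4 ⊆ GammaFour n ∪ {![0, (n : ℤ) + 1, 1, 0]} := by
  rw [← range_gammaFourPoint]
  rintro v ⟨hv, hnonneg⟩
  obtain ⟨c, hc, rfl⟩ := mem_cosetGen_range_iff.mp hv
  obtain ⟨j, rfl⟩ | rfl := eq_single_or_eq_extraCoeff hn hc hnonneg
  · exact .inl ⟨j, by simp [Pi.single_apply]⟩
  · exact .inr (sum_extraCoeff_smul n)

end GammaFour

/-- Example: for `n ≥ 2`, `E_n(Γ_n) = Γ_n` while
`E_{n+1}(Γ_n) = Λ(Γ_n) ∩ ℕ₀⁴ = Γ_n ∪ {(0,n+1,1,0)}`. -/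
theorem example_dimension_four (n : ℕ) (hn : 2 ≤ n) :
    Eext n (GammaFour n) = GammaFour n ∧
    Eext (n + 1) (GammaFour n) = cosetGen (GammaFour n) ∩ NN 4 ∧
    Eext (n + 1) (GammaFour n) = GammaFour n ∪ {![0, (n : ℤ) + 1, 1, 0]} := by
  have hsub (k : ℕ) : GammaFour n ⊆ Eext k (GammaFour n) := subset_Eext (gammaFour_subset_NN n) k
  have hcoset : Eext (n + 1) (GammaFour n) ⊆ cosetGen (GammaFour n) ∩ NN 4 := fun _ hv => hv.1
  have hunion : GammaFour n ∪ {![0, (n : ℤ) + 1, 1, 0]} ⊆ Eext (n + 1) (GammaFour n) :=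
    Set.union_subset (hsub _) (Set.singleton_subset_iff.mpr (extra_mem_Eext n))
  have hcases := cosetGen_inter_NN_subset hn
  exact ⟨(Eext_subset_gammaFour hn).antisymm (hsub n), hcoset.antisymm (hcases.trans hunion),
    (hcoset.trans hcases).antisymm hunion⟩

end
end
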